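/- Let G be a finite simple graph with 2n vertices and edge weights in a commutative ring, let 2 ≤ k ≤ n, and let a_1, b_1, a_2, b_2, …, a_k, b_k be distinct vertices such that G is noncrossing with respect to the cyclic sequence (a_1, b_1, a_2, b_2, …, a_k, b_k). Set A = {a_1,…,a_k} and B = {b_1,…,b_k}. Then for every j with 1 ≤ j ≤ k: Σ_{W⊆B, |W| even} M(G−W)·M(G−A−(B∖W)) = Σ_{Y⊆B, |Y| odd} M(G−{a_j}−Y)·M(G−(A∖{a_j})−(B∖Y)). -/

import Mathlib

/-- A perfect matching of the induced subgraph of `G` on the vertex set `s`,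
represented as a set `m` of edges of `G`: every edge of `m` is an edge of `G`
with both endpoints in `s`, and every vertex of `s` lies in exactly one edge of `m`. -/
def IsPMOn {α : Type*} (G : SimpleGraph α) (s : Finset α) (m : Finset (Sym2 α)) : Prop :=
  (∀ e ∈ m, e ∈ G.edgeSet ∧ ∀ v ∈ e, v ∈ s) ∧ ∀ v ∈ s, ∃! e, e ∈ m ∧ v ∈ e

/-- The number of perfect matchings of the induced subgraph of `G` on `s`. -/
noncomputable def pmCount {α : Type*} (G : SimpleGraph α) (s : Finset α) : ℕ :=
  Nat.card {m : Finset (Sym2 α) // IsPMOn G s m}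

open Classical in
/-- The sum, over all perfect matchings of the induced subgraph of `G` on `s`,
of the product of the weights of the edges of the matching. -/
noncomputable def pmSum {α R : Type*} [Fintype α] [DecidableEq α] [CommRing R]
    (G : SimpleGraph α) (w : Sym2 α → R) (s : Finset α) : R :=
  ∑ m ∈ Finset.univ.filter (fun m : Finset (Sym2 α) => IsPMOn G s m), ∏ e ∈ m, w e

/-- There are two vertex-disjoint paths in `G`, one joining `x₁` to `y₁` and one joining
`x₂` to `y₂`, whose internal vertices avoid `S`. -/
def DisjointPaths {α : Type*} (G : SimpleGraph α) (S : Set α) (x₁ y₁ x₂ y₂ : α) : Prop :=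
  ∃ (p : G.Walk x₁ y₁) (q : G.Walk x₂ y₂), p.IsPath ∧ q.IsPath ∧
    (∀ u ∈ p.support, u ∉ q.support) ∧
    (∀ u ∈ p.support, u ≠ x₁ → u ≠ y₁ → u ∉ S) ∧
    (∀ u ∈ q.support, u ≠ x₂ → u ≠ y₂ → u ∉ S)

/-- `G` is noncrossing with respect to the cyclic sequence given by the list `L`:
there are no indices `i < j < k < l` such that `G` contains two vertex-disjoint paths,
one joining `L[i]` to `L[k]` and one joining `L[j]` to `L[l]`, whose internal vertices
avoid the vertices of `L`. -/
def NoncrossingList {α : Type*} (G : SimpleGraph α) (L : List α) : Prop :=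
  ∀ i j k l : Fin L.length, i < j → j < k → k < l →
    ¬ DisjointPaths G {x | x ∈ L} (L.get i) (L.get k) (L.get j) (L.get l)

/-- `U, W` form a bipartition of the vertices of `G`. -/
def IsBipartition {α : Type*} [Fintype α] [DecidableEq α]
    (G : SimpleGraph α) (U W : Finset α) : Prop :=
  Disjoint U W ∧ U ∪ W = Finset.univ ∧
    ∀ ⦃x y⦄, G.Adj x y → ((x ∈ U ∧ y ∈ W) ∨ (x ∈ W ∧ y ∈ U))

/-- `P` is an `MH`-alternating path, where `MH` is the unique perfect matching of the
induced subgraph of `G` on the vertex set `sH`: `P` is a (nontrivial) path, among any two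
consecutive edges of `P` exactly one lies in `MH`, and for each endpoint the incident edge
of `P` lies in `MH` iff the endpoint belongs to `sH`. -/
def IsAltPath {α : Type*} (G : SimpleGraph α) (sH : Finset α) (MH : Finset (Sym2 α))
    {x y : α} (P : G.Walk x y) : Prop :=
  P.IsPath ∧ P.edges ≠ [] ∧
  P.edges.Chain' (fun e f => e ∈ MH ↔ f ∉ MH) ∧
  (∀ e ∈ P.edges.head?, (e ∈ MH ↔ x ∈ sH)) ∧
  (∀ e ∈ P.edges.getLast?, (e ∈ MH ↔ y ∈ sH))

/-- A family of pairwise vertex-disjoint `MH`-alternating paths in `G` whose set of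
path-endpoints is exactly `A`, each vertex of `A` being an endpoint of exactly one
path of the family. -/
def IsAltPathNest {α : Type*} (G : SimpleGraph α) (sH : Finset α) (MH : Finset (Sym2 α))
    (A : Finset α) (F : Finset (Σ x : α, Σ y : α, G.Walk x y)) : Prop :=
  (∀ p ∈ F, IsAltPath G sH MH p.2.2) ∧
  (∀ p ∈ F, ∀ q ∈ F, p ≠ q → ∀ u ∈ p.2.2.support, u ∉ q.2.2.support) ∧
  (∀ p ∈ F, p.1 ∈ A ∧ p.2.1 ∈ A) ∧
  (∀ v ∈ A, ∃! p, p ∈ F ∧ (v = p.1 ∨ v = p.2.1))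

/-- A 1-factor on `{1, …, n}`: a partition of `Fin n` into pairs, each pair recorded
as an ordered pair `(i, j)` with `i < j`. -/
def IsOneFactor (n : ℕ) (F : Finset (Fin n × Fin n)) : Prop :=
  (∀ p ∈ F, p.1 < p.2) ∧ ∀ v : Fin n, ∃! p, p ∈ F ∧ (v = p.1 ∨ v = p.2)

/-- The crossing number of a 1-factor: the number of pairs of pairs
`(i,j), (k,l)` in `F` with `i < k < j < l`. -/
def crossingNumber (n : ℕ) (F : Finset (Fin n × Fin n)) : ℕ :=
  ((F ×ˢ F).filter (fun q => q.1.1 < q.2.1 ∧ q.2.1 < q.1.2 ∧ q.1.2 < q.2.2)).card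

/-!
Let `T = A ∪ B` and superpose a perfect matching `m₁` of `G - X` with a perfect matching `m₂` of
`G - (T \ X)`, where `X ⊆ T`. Every vertex has degree at most two in `m₁ ∪ m₂` and every vertex
of `T` has degree at most one, so the components are paths and cycles, and a parity count shows
that each component meets `T` in zero or two vertices: the vertices of `T` are linked in pairs.
Since `G` is noncrossing, the terminals strictly between two linked ones are linked among
themselves, so there is an even number of them. Linked terminals therefore have positions of
opposite parity in `a₁, b₁, …, aₖ, bₖ`, and `a_j` is linked to some `b_i`. Exchanging `m₁` and `m₂`
along the component of `a_j` is a weight-preserving involution which toggles exactly `a_j` and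
`b_i` in `X`; it matches the terms of the two sides.
-/

open Finset
open scoped symmDiff

section SymmDiff

variable {α : Type*} [DecidableEq α]

lemma odd_card_symmDiff_singleton (s : Finset α) (x : α) : Odd #(s ∆ {x}) ↔ Even #s := by
  by_cases hx : x ∈ s
  · have herase : s ∆ {x} = s.erase x := by grind [mem_symmDiff]
    have hcard := card_erase_add_one hx
    grind
  · have hinsert : s ∆ {x} = insert x s := by grind [mem_symmDiff]
    have hcard := card_insert_of_notMem hx
    grind

lemma even_card_symmDiff_singleton (s : Finset α) (x : α) : Even #(s ∆ {x}) ↔ Odd #s := by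
  rw [← Nat.not_odd_iff_even, odd_card_symmDiff_singleton, Nat.not_even_iff_odd]

lemma symmDiff_pair {s : Finset α} {x : α} (hx : x ∉ s) (y : α) : s ∆ {x, y} = {x} ∪ s ∆ {y} := by
  grind [mem_symmDiff]

lemma singleton_union_symmDiff_pair {s : Finset α} {x y : α} (hx : x ∉ s) (hxy : x ≠ y) :
    ({x} ∪ s) ∆ {x, y} = s ∆ {y} := by
  grind [mem_symmDiff]

end SymmDiff

section PerfectMatchings

variable {α : Type*} {G : SimpleGraph α} {s s₁ s₂ : Finset α} {m m₁ m₂ : Finset (Sym2 α)}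

lemma isPMOn_iff_existsUnique_mk_mem :
    IsPMOn G s m ↔
      (∀ x y, s(x, y) ∈ m → G.Adj x y ∧ x ∈ s) ∧ ∀ x ∈ s, ∃! y, s(x, y) ∈ m := by
  have existsUnique_iff (x : α) : (∃! e, e ∈ m ∧ x ∈ e) ↔ ∃! y, s(x, y) ∈ m := by
    constructor
    · rintro ⟨e, ⟨he, hxe⟩, huniq⟩
      obtain ⟨y, rfl⟩ := Sym2.mem_iff_exists.1 hxe
      exact ⟨y, he, fun z hz => Sym2.congr_right.1 (huniq _ ⟨hz, Sym2.mem_mk_left x z⟩)⟩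
    · rintro ⟨y, hy, huniq⟩
      refine ⟨s(x, y), ⟨hy, Sym2.mem_mk_left x y⟩, ?_⟩
      rintro e ⟨he, hxe⟩
      obtain ⟨z, rfl⟩ := Sym2.mem_iff_exists.1 hxe
      rw [huniq z he]
  simp only [IsPMOn, existsUnique_iff]
  refine and_congr_left fun _ => ⟨fun h x y hxy => ?_, fun h => Sym2.ind fun x y hxy => ?_⟩
  · exact ⟨(h _ hxy).1, (h _ hxy).2 x (Sym2.mem_mk_left x y)⟩
  · refine ⟨(h x y hxy).1, fun v hv => ?_⟩
    rcases Sym2.mem_iff.1 hv with rfl | rfl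
    · exact (h v y hxy).2
    · exact (h v x (Sym2.eq_swap ▸ hxy)).2

namespace IsPMOn

lemma adj (h : IsPMOn G s m) {x y : α} (hxy : s(x, y) ∈ m) : G.Adj x y :=
  ((isPMOn_iff_existsUnique_mk_mem.1 h).1 x y hxy).1

lemma mem_left (h : IsPMOn G s m) {x y : α} (hxy : s(x, y) ∈ m) : x ∈ s :=
  ((isPMOn_iff_existsUnique_mk_mem.1 h).1 x y hxy).2

lemma subsingleton_setOf_mk_mem (h : IsPMOn G s m) (x : α) :
    {y | s(x, y) ∈ m}.Subsingleton := fun _ hy _ hz =>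
  ((isPMOn_iff_existsUnique_mk_mem.1 h).2 x (h.mem_left hy)).unique hy hz

lemma setOf_mk_mem_eq_empty (h : IsPMOn G s m) {x : α} (hx : x ∉ s) :
    {y | s(x, y) ∈ m} = ∅ :=
  Set.eq_empty_of_forall_notMem fun _ hy => hx (h.mem_left hy)

lemma even_card (h : IsPMOn G s m) : Even #s := by
  classical
  have hs : s = m.biUnion Sym2.toFinset := by
    ext v
    simp only [mem_biUnion, Sym2.mem_toFinset]
    exact ⟨fun hv => (h.2 v hv).exists, fun ⟨e, he, hve⟩ => (h.1 e he).2 v hve⟩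
  have hdisj : (m : Set (Sym2 α)).PairwiseDisjoint Sym2.toFinset := by
    intro e he f hf hef
    refine disjoint_left.2 fun v hve hvf => hef ?_
    rw [Sym2.mem_toFinset] at hve hvf
    exact (h.2 v ((h.1 e he).2 v hve)).unique ⟨he, hve⟩ ⟨hf, hvf⟩
  rw [hs, card_biUnion hdisj]
  refine even_sum _ fun e he => ?_
  rw [Sym2.card_toFinset_of_not_isDiag e (G.not_isDiag_of_mem_edgeSet (h.1 e he).1)]
  exact even_two

end IsPMOn

/-- The union of two edge sets as a simple graph; an edge common to both is not doubled. -/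
def superposition (m₁ m₂ : Finset (Sym2 α)) : SimpleGraph α :=
  SimpleGraph.fromEdgeSet (m₁ ∪ m₂)

lemma superposition_adj {x y : α} :
    (superposition m₁ m₂).Adj x y ↔ (s(x, y) ∈ m₁ ∨ s(x, y) ∈ m₂) ∧ x ≠ y := by
  rw [superposition, SimpleGraph.fromEdgeSet_adj]
  rfl

lemma superposition_comm (m₁ m₂ : Finset (Sym2 α)) :
    superposition m₁ m₂ = superposition m₂ m₁ := by
  rw [superposition, Set.union_comm, superposition]

lemma superposition_le (h₁ : IsPMOn G s₁ m₁) (h₂ : IsPMOn G s₂ m₂) :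
    superposition m₁ m₂ ≤ G := fun _ _ hxy =>
  (superposition_adj.1 hxy).1.elim h₁.adj h₂.adj

lemma neighborSet_superposition_subset (m₁ m₂ : Finset (Sym2 α)) (x : α) :
    (superposition m₁ m₂).neighborSet x ⊆ {y | s(x, y) ∈ m₁} ∪ {y | s(x, y) ∈ m₂} :=
  fun _ hxy => (superposition_adj.1 hxy).1

open Classical in
/-- The edge set that agrees with `m₂` inside the vertex set `C` and with `m₁` elsewhere.
It is meant for sets `C` that no edge of `m₁` or `m₂` leaves, such as a component of `m₁ ∪ m₂`;
an edge with only one endpoint in `C` counts as lying outside. -/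
noncomputable def exchange (C : Finset α) (m₁ m₂ : Finset (Sym2 α)) : Finset (Sym2 α) :=
  {e ∈ m₁ | ¬ ∀ x ∈ e, x ∈ C} ∪ {e ∈ m₂ | ∀ x ∈ e, x ∈ C}

lemma exchange_exchange (C : Finset α) (m₁ m₂ : Finset (Sym2 α)) :
    exchange C (exchange C m₁ m₂) (exchange C m₂ m₁) = m₁ := by
  ext e
  simp only [exchange, mem_union, mem_filter]
  tauto

lemma superposition_exchange (C : Finset α) (m₁ m₂ : Finset (Sym2 α)) :
    superposition (exchange C m₁ m₂) (exchange C m₂ m₁) = superposition m₁ m₂ := by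
  ext x y
  simp only [superposition_adj, exchange, mem_union, mem_filter]
  tauto

lemma prod_exchange_mul_prod_exchange {R : Type*} [CommMonoid R] (w : Sym2 α → R) (C : Finset α)
    (m₁ m₂ : Finset (Sym2 α)) :
    (∏ e ∈ exchange C m₁ m₂, w e) * ∏ e ∈ exchange C m₂ m₁, w e =
      (∏ e ∈ m₁, w e) * ∏ e ∈ m₂, w e := by
  classical
  have hdisj (m m' : Finset (Sym2 α)) :
      Disjoint {e ∈ m | ¬ ∀ x ∈ e, x ∈ C} {e ∈ m' | ∀ x ∈ e, x ∈ C} :=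
    (disjoint_filter_filter_not m' m _).symm
  rw [exchange, exchange, prod_union (hdisj m₁ m₂), prod_union (hdisj m₂ m₁),
    ← prod_filter_mul_prod_filter_not m₁ (fun e => ∀ x ∈ e, x ∈ C),
    ← prod_filter_mul_prod_filter_not m₂ (fun e => ∀ x ∈ e, x ∈ C)]
  ac_rfl

lemma mk_mem_exchange_of_mem {C : Finset α}
    (hC : ∀ x y, (superposition m₁ m₂).Adj x y → x ∈ C → y ∈ C) {x : α} (hx : x ∈ C) (y : α) :
    s(x, y) ∈ exchange C m₁ m₂ ↔ s(x, y) ∈ m₂ := by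
  have hy : s(x, y) ∈ m₁ ∨ s(x, y) ∈ m₂ → y ∈ C := fun hxy => by
    by_cases hne : x = y
    · exact hne ▸ hx
    · exact hC x y (superposition_adj.2 ⟨hxy, hne⟩) hx
  simp only [exchange, mem_union, mem_filter, Sym2.ball]
  tauto

lemma mk_mem_exchange_of_notMem {C : Finset α} {x : α} (hx : x ∉ C) (y : α) :
    s(x, y) ∈ exchange C m₁ m₂ ↔ s(x, y) ∈ m₁ := by
  simp only [exchange, mem_union, mem_filter, Sym2.ball]
  tauto

lemma isPMOn_exchange {C : Finset α} (h₁ : IsPMOn G s₁ m₁) (h₂ : IsPMOn G s₂ m₂)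
    (hC : ∀ x y, (superposition m₁ m₂).Adj x y → x ∈ C → y ∈ C)
    (hs_mem : ∀ x ∈ C, (x ∈ s ↔ x ∈ s₂)) (hs_notMem : ∀ x ∉ C, (x ∈ s ↔ x ∈ s₁)) :
    IsPMOn G s (exchange C m₁ m₂) := by
  rw [isPMOn_iff_existsUnique_mk_mem] at h₁ h₂ ⊢
  refine ⟨fun x => ?_, fun x => ?_⟩ <;> by_cases hx : x ∈ C
  · simpa only [mk_mem_exchange_of_mem hC hx, hs_mem x hx] using h₂.1 x
  · simpa only [mk_mem_exchange_of_notMem hx, hs_notMem x hx] using h₁.1 x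
  · simpa only [mk_mem_exchange_of_mem hC hx, hs_mem x hx] using h₂.2 x
  · simpa only [mk_mem_exchange_of_notMem hx, hs_notMem x hx] using h₁.2 x

lemma IsPMOn.even_card_inter [DecidableEq α] (h : IsPMOn G s m) {C : Finset α}
    (hC : ∀ x y, s(x, y) ∈ m → x ∈ C → y ∈ C) : Even #(s ∩ C) := by
  have h_empty : IsPMOn G ∅ ∅ := by simp [IsPMOn]
  have h_inside : IsPMOn G (s ∩ C) (exchange C ∅ m) :=
    isPMOn_exchange h_empty h (fun x y hxy => hC x y (by simpa using (superposition_adj.1 hxy).1))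
      (by simp +contextual) (by simp +contextual)
  exact h_inside.even_card

end PerfectMatchings

section Linkages

variable {α : Type*} {H : SimpleGraph α} {T : Finset α} {u v t : α}

lemma encard_neighborSet_toSubgraph_of_isPath {p : H.Walk u v} (hp : p.IsPath) {x : α}
    (hx : x ∈ p.support) (hxu : x ≠ u) (hxv : x ≠ v) :
    (p.toSubgraph.neighborSet x).encard = 2 := by
  obtain ⟨i, rfl, hi⟩ := SimpleGraph.Walk.mem_support_iff_exists_getVert.1 hx
  have hi₀ : i ≠ 0 := by rintro rfl; simp at hxu
  have hi₁ : i ≠ p.length := by rintro rfl; simp at hxv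
  have htwo := hp.ncard_neighborSet_toSubgraph_internal_eq_two hi₀ (by omega)
  rw [← p.finite_neighborSet_toSubgraph.cast_ncard_eq, htwo, Nat.cast_ofNat]

lemma notMem_of_mem_support_of_subsingleton_neighborSet {S : Set α}
    (hS : ∀ x ∈ S, (H.neighborSet x).Subsingleton) {p : H.Walk u v} (hp : p.IsPath) {x : α}
    (hx : x ∈ p.support) (hxu : x ≠ u) (hxv : x ≠ v) : x ∉ S := by
  intro hxS
  have htwo := (encard_neighborSet_toSubgraph_of_isPath hp hx hxu hxv).symm.le.trans
    (Set.encard_le_encard (p.toSubgraph.neighborSet_subset x))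
  exact absurd (htwo.trans (Set.encard_le_one_iff_subsingleton.2 (hS x hxS))) (by decide)

lemma disjointPaths_of_reachable {G : SimpleGraph α} (hHG : H ≤ G) {S : Set α}
    (hS : ∀ x ∈ S, (H.neighborSet x).Subsingleton) {x₁ y₁ x₂ y₂ : α}
    (h₁ : H.Reachable x₁ y₁) (h₂ : H.Reachable x₂ y₂) (h₁₂ : ¬ H.Reachable x₁ x₂) :
    DisjointPaths G S x₁ y₁ x₂ y₂ := by
  obtain ⟨p, hp⟩ := h₁.exists_isPath
  obtain ⟨q, hq⟩ := h₂.exists_isPath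
  refine ⟨p.mapLe hHG, q.mapLe hHG, hp.mapLe hHG, hq.mapLe hHG, ?_⟩
  simp only [SimpleGraph.Walk.support_mapLe_eq_support]
  classical
  exact ⟨fun x hxp hxq =>
      h₁₂ ((p.takeUntil x hxp).reachable.trans (q.takeUntil x hxq).reachable.symm),
    fun x => notMem_of_mem_support_of_subsingleton_neighborSet hS hp,
    fun x => notMem_of_mem_support_of_subsingleton_neighborSet hS hq⟩

lemma neighborSet_toSubgraph_eq_of_isPath (hdeg : ∀ x, (H.neighborSet x).encard ≤ 2)
    (huv : u ≠ v) (hu : (H.neighborSet u).Subsingleton) (hv : (H.neighborSet v).Subsingleton)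
    {p : H.Walk u v} (hp : p.IsPath) {x : α} (hx : x ∈ p.support) :
    p.toSubgraph.neighborSet x = H.neighborSet x := by
  have hsub := p.toSubgraph.neighborSet_subset x
  have hnil : ¬ p.Nil := fun h => huv h.eq
  refine hsub.antisymm ?_
  by_cases hxu : x = u
  · subst hxu
    exact fun y hy => hu (hsub (p.toSubgraph_adj_snd hnil)) hy ▸ p.toSubgraph_adj_snd hnil
  by_cases hxv : x = v
  · subst hxv
    have hadj := (p.toSubgraph_adj_penultimate hnil).symm
    exact fun y hy => hv (hsub hadj) hy ▸ hadj
  · refine (p.finite_neighborSet_toSubgraph.eq_of_subset_of_encard_le hsub ?_).ge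
    rw [encard_neighborSet_toSubgraph_of_isPath hp hx hxu hxv]
    exact hdeg x

/-- The graph `H` links the terminals `T` in pairs: its components are paths and cycles, the
terminals are ends of paths, and every set of terminals closed under being joined in `H` has even
size. This is the structure of the superposition of a perfect matching of `G - X` with one of
`G - (T \ X)`. -/
structure IsLinkage (H : SimpleGraph α) (T : Finset α) : Prop where
  encard_neighborSet_le_two (x : α) : (H.neighborSet x).encard ≤ 2
  subsingleton_neighborSet : ∀ x ∈ T, (H.neighborSet x).Subsingleton
  even_card_of_forall_reachable : ∀ D ⊆ T,
    (∀ x ∈ D, ∀ y ∈ T, H.Reachable x y → y ∈ D) → Even #D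

namespace IsLinkage

lemma eq_or_eq_of_reachable (hH : IsLinkage H T) (hu : u ∈ T) (hv : v ∈ T) (ht : t ∈ T)
    (huv : u ≠ v) (hruv : H.Reachable u v) (hrut : H.Reachable u t) : t = u ∨ t = v := by
  obtain ⟨p, hp⟩ := hruv.exists_isPath
  have htp : t ∈ p.toSubgraph.verts :=
    hrut.mem_subgraphVerts (fun x hx y hxy => by
      rw [← SimpleGraph.Subgraph.mem_neighborSet, neighborSet_toSubgraph_eq_of_isPath
        hH.encard_neighborSet_le_two huv (hH.subsingleton_neighborSet u hu)
        (hH.subsingleton_neighborSet v hv) hp (p.mem_verts_toSubgraph.1 hx)]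
      exact hxy) p.start_mem_verts_toSubgraph
  rw [p.mem_verts_toSubgraph] at htp
  by_contra! hne
  exact notMem_of_mem_support_of_subsingleton_neighborSet (S := T)
    hH.subsingleton_neighborSet hp htp hne.1 hne.2 ht

lemma exists_forall_reachable_iff (hH : IsLinkage H T) (hu : u ∈ T) :
    ∃ v ∈ T, v ≠ u ∧ ∀ x ∈ T, (H.Reachable u x ↔ x = u ∨ x = v) := by
  classical
  have heven : Even #{x ∈ T | H.Reachable u x} :=
    hH.even_card_of_forall_reachable _ (filter_subset _ _) fun x hx y hy hxy =>
      mem_filter.2 ⟨hy, (mem_filter.1 hx).2.trans hxy⟩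
  have hcard_pos : 0 < #{x ∈ T | H.Reachable u x} := card_pos.2 ⟨u, mem_filter.2 ⟨hu, .rfl⟩⟩
  have hcard : 1 < #{x ∈ T | H.Reachable u x} := by grind
  obtain ⟨v, hv, hvu⟩ := exists_mem_ne hcard u
  obtain ⟨hvT, hruv⟩ := mem_filter.1 hv
  refine ⟨v, hvT, hvu, fun x hx => ⟨hH.eq_or_eq_of_reachable hu hvT hx hvu.symm hruv, ?_⟩⟩
  rintro (rfl | rfl)
  exacts [.rfl, hruv]

end IsLinkage

variable {G : SimpleGraph α} [DecidableEq α] {L : List α}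

lemma mem_Ioo_of_reachable_get (hL : L.Nodup) (hG : NoncrossingList G L) (hHG : H ≤ G)
    (hH : IsLinkage H L.toFinset) {p q r s : Fin L.length}
    (hpq : H.Reachable (L.get p) (L.get q)) (hr : r ∈ Ioo p q)
    (hrs : H.Reachable (L.get r) (L.get s)) : s ∈ Ioo p q := by
  obtain ⟨hpr, hrq⟩ := mem_Ioo.1 hr
  have hmem (i : Fin L.length) : L.get i ∈ L.toFinset := List.mem_toFinset.2 (L.get_mem i)
  have hinj : Function.Injective L.get := List.nodup_iff_injective_get.1 hL
  have hpr_not : ¬ H.Reachable (L.get p) (L.get r) := fun hpr' => by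
    rcases hH.eq_or_eq_of_reachable (hmem p) (hmem q) (hmem r)
      (hinj.ne (hpr.trans hrq).ne) hpq hpr' with h | h
    · exact hpr.ne' (hinj h)
    · exact hrq.ne (hinj h)
  have hleaf : ∀ x ∈ {x | x ∈ L}, (H.neighborSet x).Subsingleton :=
    fun x hx => hH.subsingleton_neighborSet x (List.mem_toFinset.2 hx)
  rw [mem_Ioo]
  by_contra hs
  rcases lt_trichotomy s p with hsp | rfl | hps
  · exact hG s p r q hsp hpr hrq (disjointPaths_of_reachable hHG hleaf hrs.symm hpq
      fun h => hpr_not (h.symm.trans hrs.symm))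
  · exact hpr_not hrs.symm
  rcases lt_trichotomy s q with hsq | rfl | hqs
  · exact hs ⟨hps, hsq⟩
  · exact hpr_not (hpq.trans hrs.symm)
  · exact hG p r q s hpr hrq hqs (disjointPaths_of_reachable hHG hleaf hpq hrs hpr_not)

lemma odd_add_of_reachable_get (hL : L.Nodup) (hG : NoncrossingList G L) (hHG : H ≤ G)
    (hH : IsLinkage H L.toFinset) {p q : Fin L.length} (hpq : p ≠ q)
    (hr : H.Reachable (L.get p) (L.get q)) : Odd (p + q : ℕ) := by
  wlog hlt : p < q generalizing p q
  · rw [add_comm]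
    exact this hpq.symm hr.symm (lt_of_le_of_ne (not_lt.1 hlt) hpq.symm)
  have heven : Even #((Ioo p q).image L.get) := by
    refine hH.even_card_of_forall_reachable _ ?_ fun x hx y hy hxy => ?_
    · exact image_subset_iff.2 fun r _ => List.mem_toFinset.2 (L.get_mem r)
    · obtain ⟨r, hr', rfl⟩ := mem_image.1 hx
      obtain ⟨s, rfl⟩ := List.mem_iff_get.1 (List.mem_toFinset.1 hy)
      exact mem_image_of_mem _ (mem_Ioo_of_reachable_get hL hG hHG hH hr hr' hxy)
  rw [card_image_of_injective _ (List.nodup_iff_injective_get.1 hL), Fin.card_Ioo] at heven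
  grind

lemma exists_odd_add_forall_reachable_get_iff (hL : L.Nodup) (hG : NoncrossingList G L)
    (hHG : H ≤ G) (hH : IsLinkage H L.toFinset) (p : Fin L.length) :
    ∃ q : Fin L.length, Odd (p + q : ℕ) ∧
      ∀ x ∈ L.toFinset, (H.Reachable (L.get p) x ↔ x = L.get p ∨ x = L.get q) := by
  obtain ⟨v, hv, hvp, hpair⟩ := hH.exists_forall_reachable_iff (List.mem_toFinset.2 (L.get_mem p))
  obtain ⟨q, rfl⟩ := List.mem_iff_get.1 (List.mem_toFinset.1 hv)
  have hpq : H.Reachable (L.get p) (L.get q) := (hpair _ hv).2 (.inr rfl)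
  exact ⟨q, odd_add_of_reachable_get hL hG hHG hH (ne_of_apply_ne L.get hvp.symm) hpq, hpair⟩

end Linkages

section Components

variable {α : Type*} [Fintype α] {H : SimpleGraph α} {t : α}

open Classical in
/-- The vertices of the component of `t` in `H`, as a finset. -/
noncomputable def componentFinset (H : SimpleGraph α) (t : α) : Finset α :=
  {x | H.Reachable t x}

lemma mem_componentFinset {x : α} : x ∈ componentFinset H t ↔ H.Reachable t x := by
  simp only [componentFinset, mem_filter_univ]

lemma mem_componentFinset_of_adj (t x y : α) (hxy : H.Adj x y)
    (hx : x ∈ componentFinset H t) : y ∈ componentFinset H t :=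
  mem_componentFinset.2 ((mem_componentFinset.1 hx).trans hxy.reachable)

end Components

section Condensation

variable {α : Type*} [Fintype α] [DecidableEq α] {G : SimpleGraph α} {T X C : Finset α}
  {m₁ m₂ : Finset (Sym2 α)} {t : α}

lemma even_card_inter_of_isPMOn_compl (hX : X ⊆ T) (h₁ : IsPMOn G Xᶜ m₁)
    (h₂ : IsPMOn G (T \ X)ᶜ m₂)
    (hC : ∀ x y, (superposition m₁ m₂).Adj x y → x ∈ C → y ∈ C) : Even #(T ∩ C) := by
  have heven₁ : Even #(Xᶜ ∩ C) := h₁.even_card_inter fun x y hxy =>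
    hC x y (superposition_adj.2 ⟨.inl hxy, (h₁.adj hxy).ne⟩)
  have heven₂ : Even #((T \ X)ᶜ ∩ C) := h₂.even_card_inter fun x y hxy =>
    hC x y (superposition_adj.2 ⟨.inr hxy, (h₂.adj hxy).ne⟩)
  have hcard_compl (S : Finset α) : #(S ∩ C) + #(Sᶜ ∩ C) = #C := by
    rw [inter_comm, inter_comm Sᶜ, ← sdiff_eq_inter_compl, card_inter_add_card_sdiff]
  have hcard_T : #(X ∩ C) + #((T \ X) ∩ C) = #(T ∩ C) := by
    rw [← card_union_of_disjoint (disjoint_sdiff.mono inter_subset_left inter_subset_left),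
      ← union_inter_distrib_right, union_sdiff_of_subset hX]
  grind [hcard_compl X, hcard_compl (T \ X)]

lemma isLinkage_superposition (hX : X ⊆ T) (h₁ : IsPMOn G Xᶜ m₁) (h₂ : IsPMOn G (T \ X)ᶜ m₂) :
    IsLinkage (superposition m₁ m₂) T where
  encard_neighborSet_le_two x := calc
    _ ≤ ({y | s(x, y) ∈ m₁} ∪ {y | s(x, y) ∈ m₂}).encard :=
      Set.encard_le_encard (neighborSet_superposition_subset m₁ m₂ x)
    _ ≤ {y | s(x, y) ∈ m₁}.encard + {y | s(x, y) ∈ m₂}.encard := Set.encard_union_le _ _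
    _ ≤ 1 + 1 := add_le_add (Set.encard_le_one_iff_subsingleton.2 (h₁.subsingleton_setOf_mk_mem x))
      (Set.encard_le_one_iff_subsingleton.2 (h₂.subsingleton_setOf_mk_mem x))
    _ = 2 := one_add_one_eq_two
  subsingleton_neighborSet x hx := by
    have hsub := neighborSet_superposition_subset m₁ m₂ x
    by_cases hxX : x ∈ X
    · rw [h₁.setOf_mk_mem_eq_empty (by simpa), Set.empty_union] at hsub
      exact (h₂.subsingleton_setOf_mk_mem x).anti hsub
    · rw [h₂.setOf_mk_mem_eq_empty (by simp [hx, hxX]), Set.union_empty] at hsub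
      exact (h₁.subsingleton_setOf_mk_mem x).anti hsub
  even_card_of_forall_reachable D hD hclosed := by
    let C := D.biUnion (componentFinset (superposition m₁ m₂))
    have hC : ∀ x y, (superposition m₁ m₂).Adj x y → x ∈ C → y ∈ C := fun x y hxy hx => by
      obtain ⟨z, hz, hzx⟩ := mem_biUnion.1 hx
      exact mem_biUnion.2 ⟨z, hz, mem_componentFinset_of_adj z x y hxy hzx⟩
    have hTC : T ∩ C = D := by
      ext x
      simp only [C, mem_inter, mem_biUnion, mem_componentFinset]
      exact ⟨fun ⟨hx, y, hy, hyx⟩ => hclosed y hy x hx hyx, fun hx => ⟨hD hx, x, hx, .rfl⟩⟩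
    exact hTC ▸ even_card_inter_of_isPMOn_compl hX h₁ h₂ hC

lemma isPMOn_exchange_compl_symmDiff (hX : X ⊆ T) (h₁ : IsPMOn G Xᶜ m₁)
    (h₂ : IsPMOn G (T \ X)ᶜ m₂)
    (hC : ∀ x y, (superposition m₁ m₂).Adj x y → x ∈ C → y ∈ C) :
    IsPMOn G (X ∆ (T ∩ C))ᶜ (exchange C m₁ m₂) := by
  refine isPMOn_exchange h₁ h₂ hC (fun x hx => ?_) fun x hx => ?_
  · have := @hX x
    simp only [mem_compl, mem_symmDiff, mem_inter, mem_sdiff, hx]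
    tauto
  · simp [hx]

/-- A set `X` together with two edge sets, meant to be a perfect matching of `G - X` and one of
`G - (T \ X)` for a set of terminals `T`. -/
abbrev MatchingTriple (α : Type*) : Type _ :=
  (_ : Finset α) × Finset (Sym2 α) × Finset (Sym2 α)

open Classical in
/-- The triples `(X, m₁, m₂)` with `X` in the family `𝒳`, `m₁` a perfect matching of `G - X` and
`m₂` one of `G - (T \ X)`. -/
noncomputable def matchingTriples (G : SimpleGraph α) (T : Finset α) (𝒳 : Finset (Finset α)) :
    Finset (MatchingTriple α) :=
  𝒳.sigma fun X => univ.filter (IsPMOn G Xᶜ ·) ×ˢ univ.filter (IsPMOn G (T \ X)ᶜ ·)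

lemma mem_matchingTriples {𝒳 : Finset (Finset α)} :
    ⟨X, m₁, m₂⟩ ∈ matchingTriples G T 𝒳 ↔
      X ∈ 𝒳 ∧ IsPMOn G Xᶜ m₁ ∧ IsPMOn G (T \ X)ᶜ m₂ := by
  simp [matchingTriples]

lemma sum_pmSum_mul_pmSum_eq_sum_matchingTriples {R : Type*} [CommRing R] (w : Sym2 α → R)
    (𝒳 : Finset (Finset α)) :
    ∑ X ∈ 𝒳, pmSum G w Xᶜ * pmSum G w (T \ X)ᶜ =
      ∑ p ∈ matchingTriples G T 𝒳, (∏ e ∈ p.2.1, w e) * ∏ e ∈ p.2.2, w e := by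
  simp only [matchingTriples, sum_sigma, sum_product, pmSum, sum_mul_sum]

/-- Exchange the two matchings along the component of `t` in their superposition, and toggle the
terminals of that component in `X`. -/
noncomputable def exchangeAt (T : Finset α) (t : α) (p : MatchingTriple α) : MatchingTriple α :=
  let C := componentFinset (superposition p.2.1 p.2.2) t
  ⟨p.1 ∆ (T ∩ C), exchange C p.2.1 p.2.2, exchange C p.2.2 p.2.1⟩

lemma exchangeAt_involutive (T : Finset α) (t : α) : Function.Involutive (exchangeAt T t) := by
  rintro ⟨X, m₁, m₂⟩
  simp only [exchangeAt, superposition_exchange, exchange_exchange,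
    symmDiff_symmDiff_cancel_right]

/-- Whenever a perfect matching of `G - X` is superposed with one of `G - (T \ X)`, the terminals
in the component of `t` are `t` itself and a single element of `P`. -/
def LinksInto (G : SimpleGraph α) (T : Finset α) (t : α) (P : Finset α) : Prop :=
  ∀ X ⊆ T, ∀ m₁ m₂, IsPMOn G Xᶜ m₁ → IsPMOn G (T \ X)ᶜ m₂ →
    ∃ b ∈ P, T ∩ componentFinset (superposition m₁ m₂) t = {t, b}

lemma exchangeAt_mem_matchingTriples {𝒳 𝒴 : Finset (Finset α)} {P : Finset α}
    (hlink : LinksInto G T t P) (h𝒳 : ∀ X ∈ 𝒳, X ⊆ T)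
    (hmaps : ∀ X ∈ 𝒳, ∀ b ∈ P, X ∆ {t, b} ∈ 𝒴) {p : MatchingTriple α}
    (hp : p ∈ matchingTriples G T 𝒳) : exchangeAt T t p ∈ matchingTriples G T 𝒴 := by
  obtain ⟨X, m₁, m₂⟩ := p
  obtain ⟨hX𝒳, h₁, h₂⟩ := mem_matchingTriples.1 hp
  have hX : X ⊆ T := h𝒳 X hX𝒳
  obtain ⟨b, hb, hterminals⟩ := hlink X hX m₁ m₂ h₁ h₂
  refine mem_matchingTriples.2 ⟨?_, ?_, ?_⟩
  · exact hterminals ▸ hmaps X hX𝒳 b hb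
  · exact isPMOn_exchange_compl_symmDiff hX h₁ h₂ (mem_componentFinset_of_adj t)
  · have hsdiff (C : Finset α) : T \ (X ∆ (T ∩ C)) = (T \ X) ∆ (T ∩ C) := by
      ext x
      have := @hX x
      simp only [mem_sdiff, mem_symmDiff, mem_inter]
      tauto
    rw [hsdiff]
    refine isPMOn_exchange_compl_symmDiff sdiff_subset h₂ ?_ ?_
    · rwa [Finset.sdiff_sdiff_eq_self hX]
    · rw [superposition_comm]
      exact mem_componentFinset_of_adj t

lemma sum_pmSum_mul_pmSum_eq_of_linksInto {R : Type*} [CommRing R] (w : Sym2 α → R)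
    {𝒳 𝒴 : Finset (Finset α)} {P : Finset α} (hlink : LinksInto G T t P)
    (h𝒳 : ∀ X ∈ 𝒳, X ⊆ T) (h𝒴 : ∀ Y ∈ 𝒴, Y ⊆ T)
    (h𝒳𝒴 : ∀ X ∈ 𝒳, ∀ b ∈ P, X ∆ {t, b} ∈ 𝒴) (h𝒴𝒳 : ∀ Y ∈ 𝒴, ∀ b ∈ P, Y ∆ {t, b} ∈ 𝒳) :
    ∑ X ∈ 𝒳, pmSum G w Xᶜ * pmSum G w (T \ X)ᶜ =
      ∑ Y ∈ 𝒴, pmSum G w Yᶜ * pmSum G w (T \ Y)ᶜ := by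
  rw [sum_pmSum_mul_pmSum_eq_sum_matchingTriples, sum_pmSum_mul_pmSum_eq_sum_matchingTriples]
  exact sum_nbij' (exchangeAt T t) (exchangeAt T t)
    (fun _ => exchangeAt_mem_matchingTriples hlink h𝒳 h𝒳𝒴)
    (fun _ => exchangeAt_mem_matchingTriples hlink h𝒴 h𝒴𝒳)
    (fun p _ => exchangeAt_involutive T t p) (fun p _ => exchangeAt_involutive T t p)
    (fun p _ => (prod_exchange_mul_prod_exchange w _ p.2.1 p.2.2).symm)

lemma sum_even_pmSum_mul_pmSum_eq_sum_odd {R : Type*} [CommRing R] (w : Sym2 α → R)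
    {B : Finset α} (hBT : B ⊆ T) (htT : t ∈ T) (htB : t ∉ B) (hlink : LinksInto G T t B) :
    ∑ W ∈ B.powerset with Even #W, pmSum G w Wᶜ * pmSum G w (T \ W)ᶜ =
      ∑ Y ∈ B.powerset with Odd #Y, pmSum G w ({t} ∪ Y)ᶜ * pmSum G w (T \ ({t} ∪ Y))ᶜ := by
  have hnotMem {W : Finset α} (hW : W ⊆ B) : t ∉ W := fun htW => htB (hW htW)
  have hsubset {W : Finset α} (hW : W ⊆ B) {b : α} (hb : b ∈ B) : W ∆ {b} ⊆ B :=
    symmDiff_subset_union.trans (union_subset hW (singleton_subset_iff.2 hb))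
  have hinj : Set.InjOn ({t} ∪ ·) ({Y ∈ B.powerset | Odd #Y} : Finset (Finset α)) :=
    Set.LeftInvOn.injOn (f₁' := (erase · t)) fun Y hY =>
      erase_insert (hnotMem (mem_powerset.1 (mem_filter.1 hY).1))
  rw [← sum_image (f := fun X => pmSum G w Xᶜ * pmSum G w (T \ X)ᶜ) hinj]
  refine sum_pmSum_mul_pmSum_eq_of_linksInto w hlink (fun W hW => ?_)
    (forall_mem_image.2 fun Y hY => ?_) (fun W hW b hb => ?_)
    (forall_mem_image.2 fun Y hY b hb => ?_)
  all_goals rw [mem_filter, mem_powerset] at *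
  · exact hW.1.trans hBT
  · exact union_subset (singleton_subset_iff.2 htT) (hY.1.trans hBT)
  · rw [symmDiff_pair (hnotMem hW.1) b]
    exact mem_image_of_mem _ (mem_filter.2 ⟨mem_powerset.2 (hsubset hW.1 hb),
      (odd_card_symmDiff_singleton W b).2 hW.2⟩)
  · rw [singleton_union_symmDiff_pair (hnotMem hY.1) (ne_of_mem_of_not_mem hb htB).symm]
    exact ⟨hsubset hY.1 hb, (even_card_symmDiff_singleton Y b).2 hY.2⟩

lemma sum_even_pmSum_mul_pmSum_eq_sum_odd_of_disjoint {R : Type*} [CommRing R] (w : Sym2 α → R)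
    {A B : Finset α} (hAB : Disjoint A B) (ht : t ∈ A) (hlink : LinksInto G (A ∪ B) t B) :
    ∑ W ∈ B.powerset with Even #W, pmSum G w Wᶜ * pmSum G w (A ∪ (B \ W))ᶜ =
      ∑ Y ∈ B.powerset with Odd #Y,
        pmSum G w ({t} ∪ Y)ᶜ * pmSum G w ((A \ {t}) ∪ (B \ Y))ᶜ := by
  have htB : t ∉ B := disjoint_left.1 hAB ht
  have hsdiff {W : Finset α} (hW : W ⊆ B) : A ∪ (B \ W) = (A ∪ B) \ W := by
    rw [union_sdiff_distrib, sdiff_eq_self_of_disjoint (hAB.mono_right hW)]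
  have hsdiff_union {Y : Finset α} (hY : Y ⊆ B) :
      (A \ {t}) ∪ (B \ Y) = (A ∪ B) \ ({t} ∪ Y) := by
    grind [disjoint_left]
  calc
    _ = ∑ W ∈ B.powerset with Even #W, pmSum G w Wᶜ * pmSum G w ((A ∪ B) \ W)ᶜ :=
      sum_congr rfl fun W hW => by rw [hsdiff (mem_powerset.1 (mem_filter.1 hW).1)]
    _ = ∑ Y ∈ B.powerset with Odd #Y,
          pmSum G w ({t} ∪ Y)ᶜ * pmSum G w ((A ∪ B) \ ({t} ∪ Y))ᶜ :=
      sum_even_pmSum_mul_pmSum_eq_sum_odd w subset_union_right (mem_union_left B ht) htB hlink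
    _ = _ :=
      sum_congr rfl fun Y hY => by rw [hsdiff_union (mem_powerset.1 (mem_filter.1 hY).1)]

lemma linksInto_of_noncrossingList {L : List α} (hL : L.Nodup) (hG : NoncrossingList G L)
    (p : Fin L.length) {P : Finset α} (hP : ∀ q : Fin L.length, Odd (p + q : ℕ) → L.get q ∈ P) :
    LinksInto G L.toFinset (L.get p) P := by
  intro X hX m₁ m₂ h₁ h₂
  obtain ⟨q, hodd, hpair⟩ := exists_odd_add_forall_reachable_get_iff hL hG
    (superposition_le h₁ h₂) (isLinkage_superposition hX h₁ h₂) p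
  refine ⟨L.get q, hP q hodd, ?_⟩
  have hmem : ∀ x, x = L.get p ∨ x = L.get q → x ∈ L.toFinset := by
    rintro x (rfl | rfl) <;> exact List.mem_toFinset.2 (L.get_mem _)
  ext x
  rw [mem_inter, mem_componentFinset, mem_insert, mem_singleton]
  exact ⟨fun ⟨hx, hr⟩ => (hpair x hx).1 hr, fun hx => ⟨hmem x hx, (hpair x (hmem x hx)).2 hx⟩⟩

end Condensation

section Interleave

lemma getElem?_flatMap_pair_two_mul {ι α : Type*} (f g : ι → α) (l : List ι) (n : ℕ) :
    (l.flatMap fun i => [f i, g i])[2 * n]? = l[n]?.map f := by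
  induction l generalizing n with
  | nil => simp
  | cons i l ih => cases n with
    | zero => simp
    | succ n => simpa [mul_add] using ih n

lemma getElem?_flatMap_pair_two_mul_add_one {ι α : Type*} (f g : ι → α) (l : List ι) (n : ℕ) :
    (l.flatMap fun i => [f i, g i])[2 * n + 1]? = l[n]?.map g := by
  induction l generalizing n with
  | nil => simp
  | cons i l ih => cases n with
    | zero => simp
    | succ n => simpa [mul_add] using ih n

variable {α : Type*} {k : ℕ} {a b : Fin k → α}

/-- The sequence `a₁, b₁, a₂, b₂, …, aₖ, bₖ`. Positions are counted from zero, so the `aᵢ` are at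
the even and the `bᵢ` at the odd ones. -/
abbrev interleave (a b : Fin k → α) : List α :=
  (List.finRange k).flatMap fun i => [a i, b i]

lemma interleave_getElem?_two_mul (a b : Fin k → α) (i : Fin k) :
    (interleave a b)[2 * (i : ℕ)]? = some (a i) := by
  simp [getElem?_flatMap_pair_two_mul]

lemma interleave_getElem?_two_mul_add_one (a b : Fin k → α) (i : Fin k) :
    (interleave a b)[2 * (i : ℕ) + 1]? = some (b i) := by
  simp [getElem?_flatMap_pair_two_mul_add_one]

lemma exists_even_interleave_get_eq (a b : Fin k → α) (i : Fin k) :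
    ∃ p : Fin (interleave a b).length, Even (p : ℕ) ∧ (interleave a b).get p = a i := by
  obtain ⟨hlt, heq⟩ := List.getElem?_eq_some_iff.1 (interleave_getElem?_two_mul a b i)
  exact ⟨⟨2 * i, hlt⟩, even_two_mul _, heq⟩

lemma interleave_get_mem_range_of_odd {q : Fin (interleave a b).length} (hq : Odd (q : ℕ)) :
    (interleave a b).get q ∈ Set.range b := by
  obtain ⟨n, hn⟩ := hq
  have hget : (interleave a b)[2 * n + 1]? = some ((interleave a b).get q) := by
    rw [← hn]
    exact List.getElem?_eq_getElem q.isLt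
  rw [getElem?_flatMap_pair_two_mul_add_one, Option.map_eq_some_iff] at hget
  obtain ⟨i, -, hi⟩ := hget
  exact ⟨i, hi⟩

variable [DecidableEq α]

lemma toFinset_interleave (a b : Fin k → α) :
    (interleave a b).toFinset = univ.image a ∪ univ.image b := by
  ext x
  simp [List.mem_flatMap, exists_or, eq_comm]

lemma disjoint_image_of_nodup_interleave (h : (interleave a b).Nodup) :
    Disjoint (univ.image a) (univ.image b) := by
  simp only [disjoint_left, mem_image, mem_univ, true_and, forall_exists_index,
    forall_apply_eq_imp_iff, not_exists]
  intro i j hij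
  have hi := interleave_getElem?_two_mul a b i
  have hj := interleave_getElem?_two_mul_add_one a b j
  have hpos : 2 * (i : ℕ) = 2 * (j : ℕ) + 1 :=
    (List.getElem?_inj (List.getElem?_eq_some_iff.1 hi).1 h).1 (by rw [hi, hj, hij])
  omega

end Interleave

/-- Yan–Yeh–Zhang graphical condensation (Theorem 1.2). -/
theorem yan_yeh_zhang_condensation {α R : Type*} [Fintype α] [DecidableEq α] [CommRing R]
    (G : SimpleGraph α) (w : Sym2 α → R) (n k : ℕ)
    (hcard : Fintype.card α = 2 * n) (hk2 : 2 ≤ k) (hkn : k ≤ n)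
    (a b : Fin k → α)
    (hdist : ((List.finRange k).flatMap (fun i => [a i, b i])).Nodup)
    (hnc : NoncrossingList G ((List.finRange k).flatMap (fun i => [a i, b i])))
    (A B : Finset α) (hA : A = Finset.univ.image a) (hB : B = Finset.univ.image b)
    (j : Fin k) :
    ∑ W ∈ B.powerset.filter (fun W => Even W.card),
        pmSum G w (Finset.univ \ W) * pmSum G w (Finset.univ \ (A ∪ (B \ W))) =
    ∑ Y ∈ B.powerset.filter (fun Y => Odd Y.card),
        pmSum G w (Finset.univ \ ({a j} ∪ Y)) *
          pmSum G w (Finset.univ \ ((A \ {a j}) ∪ (B \ Y))) := by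
  subst hA hB
  simp only [← Finset.compl_eq_univ_sdiff]
  obtain ⟨p, hp, hpj⟩ := exists_even_interleave_get_eq a b j
  have hlink : LinksInto G (Finset.univ.image a ∪ Finset.univ.image b) (a j)
      (Finset.univ.image b) := by
    rw [← toFinset_interleave, ← hpj]
    refine linksInto_of_noncrossingList hdist hnc p fun q hpq => ?_
    obtain ⟨i, hi⟩ := interleave_get_mem_range_of_odd ((Nat.odd_add'.1 hpq).2 hp)
    exact hi ▸ Finset.mem_image_of_mem b (Finset.mem_univ i)
  exact sum_even_pmSum_mul_pmSum_eq_sum_odd_of_disjoint w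
    (disjoint_image_of_nodup_interleave hdist) (Finset.mem_image_of_mem a (Finset.mem_univ j)) hlink
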